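/- arXiv:1906.06741 — 5 statements merged into one kernel-verified Lean document; each statement's English description precedes it below -/
import Mathlib

section
/- Theorem 2.1: The second order linear discrete-time system x_{t+2} = A₀x_t + A₁x_{t+1} + Bu_t with measurements y_t = Cx_t is observable — i.e., for every input sequence u : ℕ → ℝʳ, any two solutions x, x̃ of the recurrence with this same input for which Cx_t = Cx̃_t for all t = 0, 1, …, 2n−1 satisfy x₀ = x̃₀ and x₁ = x̃₁ — if and only if the observability matrix 𝒪(A₀,A₁,C) has rank 2n. -/
/-- The pair `(S_k, P_k)` of matrix sequences: `S₀ = A₀`, `P₀ = A₁`,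
`S_k = P_{k−1}A₀`, `P_k = S_{k−1} + P_{k−1}A₁` for `k ≥ 1`. -/
noncomputable def SPseq {n : ℕ} (A0 A1 : Matrix (Fin n) (Fin n) ℝ) :
    ℕ → Matrix (Fin n) (Fin n) ℝ × Matrix (Fin n) (Fin n) ℝ
  | 0 => (A0, A1)
  | k + 1 => ((SPseq A0 A1 k).2 * A0, (SPseq A0 A1 k).1 + (SPseq A0 A1 k).2 * A1)

/-- Left `p × n` block of the `i`-th block row of the observability matrix:
`C`, `0`, `C·S₀`, `C·S₁`, …. -/
noncomputable def obsBlockL {n p : ℕ} (A0 A1 : Matrix (Fin n) (Fin n) ℝ)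
    (C : Matrix (Fin p) (Fin n) ℝ) : ℕ → Matrix (Fin p) (Fin n) ℝ
  | 0 => C
  | 1 => 0
  | k + 2 => C * (SPseq A0 A1 k).1

/-- Right `p × n` block of the `i`-th block row of the observability matrix:
`0`, `C`, `C·P₀`, `C·P₁`, …. -/
noncomputable def obsBlockR {n p : ℕ} (A0 A1 : Matrix (Fin n) (Fin n) ℝ)
    (C : Matrix (Fin p) (Fin n) ℝ) : ℕ → Matrix (Fin p) (Fin n) ℝ
  | 0 => 0
  | 1 => C
  | k + 2 => C * (SPseq A0 A1 k).2

/-- The `(2np) × (2n)` observability matrix `𝒪(A₀, A₁, C)` whose `2n` block rows are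
`[C, 0]`, `[0, C]`, `[C·S₀, C·P₀]`, …, `[C·S_{2n−3}, C·P_{2n−3}]`. -/
noncomputable def obsMat {n p : ℕ} (A0 A1 : Matrix (Fin n) (Fin n) ℝ)
    (C : Matrix (Fin p) (Fin n) ℝ) : Matrix (Fin (2 * n) × Fin p) (Fin n ⊕ Fin n) ℝ :=
  fun iq => Sum.elim (fun j => obsBlockL A0 A1 C (iq.1 : ℕ) iq.2 j)
    (fun j => obsBlockR A0 A1 C (iq.1 : ℕ) iq.2 j)

/-!
By superposition, the difference of two solutions with the same input solves the homogeneous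
recurrence, and the matrices `S_k`, `P_k` express `x_{k+2}` there through `x₀` and `x₁`. Hence `𝒪`
sends the difference of the stacked initial values to the differences of the first `2n` outputs.
Since every pair of initial values is realized by a solution, the outputs determine the initial
values iff `𝒪` is injective. This holds for each input separately.
-/

theorem rank_eq_card_iff_mulVec_injective {m k K : Type*} [Fintype k] [Field K]
    (M : Matrix m k K) : M.rank = Fintype.card k ↔ Function.Injective M.mulVec := by
  rw [Matrix.mulVec_injective_iff, linearIndependent_iff_card_eq_finrank_span,
    Matrix.rank_eq_finrank_span_cols, Set.finrank, eq_comm]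

section ForcedSolution

open scoped Matrix

variable {m R : Type*} [Fintype m]

/-- Solutions of the recurrence `x_{t+2} = A₀x_t + A₁x_{t+1} + f_t`. The control input enters only
through the forcing term `f_t = B u_t`. -/
def IsForcedSolution [NonUnitalNonAssocSemiring R] (A0 A1 : Matrix m m R) (f x : ℕ → m → R) :
    Prop :=
  ∀ t, x (t + 2) = A0 *ᵥ x t + A1 *ᵥ x (t + 1) + f t

/-- The solution of the recurrence with forcing term `f` and initial values `a`, `b` at times
`0`, `1`. -/
def forcedSolution [NonUnitalNonAssocSemiring R] (A0 A1 : Matrix m m R) (f : ℕ → m → R)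
    (a b : m → R) : ℕ → m → R
  | 0 => a
  | 1 => b
  | t + 2 => A0 *ᵥ forcedSolution A0 A1 f a b t + A1 *ᵥ forcedSolution A0 A1 f a b (t + 1) + f t

theorem isForcedSolution_forcedSolution [NonUnitalNonAssocSemiring R] (A0 A1 : Matrix m m R)
    (f : ℕ → m → R) (a b : m → R) :
    IsForcedSolution A0 A1 f (forcedSolution A0 A1 f a b) :=
  fun _ => rfl

theorem IsForcedSolution.sub [NonUnitalNonAssocRing R] {A0 A1 : Matrix m m R}
    {f g x y : ℕ → m → R} (hx : IsForcedSolution A0 A1 f x) (hy : IsForcedSolution A0 A1 g y) :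
    IsForcedSolution A0 A1 (f - g) (x - y) := fun t => by
  simp only [Pi.sub_apply, hx t, hy t, Matrix.mulVec_sub]
  abel

end ForcedSolution

section Observability

open scoped Matrix

variable {n p : ℕ} {A0 A1 : Matrix (Fin n) (Fin n) ℝ} {f x y z : ℕ → Fin n → ℝ}

theorem IsForcedSolution.apply_add_two_eq_SPseq (hz : IsForcedSolution A0 A1 0 z) (k : ℕ) :
    z (k + 2) = (SPseq A0 A1 k).1 *ᵥ z 0 + (SPseq A0 A1 k).2 *ᵥ z 1 := by
  -- The recursion for `S_k`, `P_k` multiplies on the right, so it peels off the first time step: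
  -- the induction hypothesis is applied to the shifted sequence.
  induction k generalizing z with
  | zero => simpa [SPseq] using hz 0
  | succ k ih =>
    have hshift : IsForcedSolution A0 A1 0 fun t => z (t + 1) := fun t => hz (t + 1)
    have hz2 : z 2 = A0 *ᵥ z 0 + A1 *ᵥ z 1 := by simpa using hz 0
    calc z (k + 1 + 2)
        = (SPseq A0 A1 k).1 *ᵥ z 1 + (SPseq A0 A1 k).2 *ᵥ z 2 := ih hshift
      _ = (SPseq A0 A1 (k + 1)).1 *ᵥ z 0 + (SPseq A0 A1 (k + 1)).2 *ᵥ z 1 := by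
        simp only [SPseq, hz2, Matrix.mulVec_add, Matrix.add_mulVec, Matrix.mulVec_mulVec]
        abel

theorem IsForcedSolution.mulVec_eq_obsBlock (hz : IsForcedSolution A0 A1 0 z)
    (C : Matrix (Fin p) (Fin n) ℝ) :
    ∀ t, C *ᵥ z t = obsBlockL A0 A1 C t *ᵥ z 0 + obsBlockR A0 A1 C t *ᵥ z 1
  | 0 => by simp [obsBlockL, obsBlockR]
  | 1 => by simp [obsBlockL, obsBlockR]
  | k + 2 => by
    simp only [hz.apply_add_two_eq_SPseq k, obsBlockL, obsBlockR, Matrix.mulVec_add,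
      Matrix.mulVec_mulVec]

theorem obsMat_mulVec_sumElim (A0 A1 : Matrix (Fin n) (Fin n) ℝ) (C : Matrix (Fin p) (Fin n) ℝ)
    (a b : Fin n → ℝ) (i : Fin (2 * n)) (q : Fin p) :
    (obsMat A0 A1 C *ᵥ Sum.elim a b) (i, q) =
      (obsBlockL A0 A1 C i *ᵥ a + obsBlockR A0 A1 C i *ᵥ b) q := by
  simp [Matrix.mulVec, dotProduct, obsMat]

theorem IsForcedSolution.obsMat_mulVec_eq_zero_iff (hz : IsForcedSolution A0 A1 0 z)
    (C : Matrix (Fin p) (Fin n) ℝ) :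
    obsMat A0 A1 C *ᵥ Sum.elim (z 0) (z 1) = 0 ↔ ∀ t < 2 * n, C *ᵥ z t = 0 := by
  simp only [funext_iff, Prod.forall, Fin.forall_iff, obsMat_mulVec_sumElim,
    ← hz.mulVec_eq_obsBlock C, Pi.zero_apply]

theorem IsForcedSolution.obsMat_mulVec_eq_iff (hx : IsForcedSolution A0 A1 f x)
    (hy : IsForcedSolution A0 A1 f y) (C : Matrix (Fin p) (Fin n) ℝ) :
    obsMat A0 A1 C *ᵥ Sum.elim (x 0) (x 1) = obsMat A0 A1 C *ᵥ Sum.elim (y 0) (y 1) ↔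
      ∀ t < 2 * n, C *ᵥ x t = C *ᵥ y t := by
  have hxy : IsForcedSolution A0 A1 0 (x - y) := by simpa only [sub_self] using hx.sub hy
  rw [← sub_eq_zero, ← Matrix.mulVec_sub, ← Sum.elim_sub_sub]
  simpa only [Pi.sub_apply, Matrix.mulVec_sub, sub_eq_zero] using hxy.obsMat_mulVec_eq_zero_iff C

theorem stmt1_general (A0 A1 : Matrix (Fin n) (Fin n) ℝ) (C : Matrix (Fin p) (Fin n) ℝ)
    (f : ℕ → Fin n → ℝ) :
    (∀ x y, IsForcedSolution A0 A1 f x → IsForcedSolution A0 A1 f y →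
      (∀ t < 2 * n, C *ᵥ x t = C *ᵥ y t) → x 0 = y 0 ∧ x 1 = y 1) ↔
    (obsMat A0 A1 C).rank = 2 * n := by
  have hrank : (obsMat A0 A1 C).rank = 2 * n ↔ Function.Injective (obsMat A0 A1 C).mulVec := by
    simpa [two_mul] using rank_eq_card_iff_mulVec_injective (obsMat A0 A1 C)
  rw [hrank]
  constructor
  · intro hobs v w hvw
    have hsol (v : Fin n ⊕ Fin n → ℝ) :=
      isForcedSolution_forcedSolution A0 A1 f (v ∘ Sum.inl) (v ∘ Sum.inr)
    have houtputs := ((hsol v).obsMat_mulVec_eq_iff (hsol w) C).1 <| by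
      simpa only [forcedSolution, Sum.elim_comp_inl_inr] using hvw
    obtain ⟨hleft, hright⟩ := hobs _ _ (hsol v) (hsol w) houtputs
    rw [← Sum.elim_comp_inl_inr v, ← Sum.elim_comp_inl_inr w]
    exact congrArg₂ Sum.elim hleft hright
  · intro hinj x y hx hy houtputs
    exact Sum.elim_eq_iff.1 (hinj ((hx.obsMat_mulVec_eq_iff hy C).2 houtputs))

end Observability

theorem stmt1 {n r p : ℕ} (hn : 2 ≤ n) (hr : 1 ≤ r) (hp : 1 ≤ p)
    (A0 A1 : Matrix (Fin n) (Fin n) ℝ) (B : Matrix (Fin n) (Fin r) ℝ)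
    (C : Matrix (Fin p) (Fin n) ℝ) :
    (∀ u : ℕ → Fin r → ℝ, ∀ x x' : ℕ → Fin n → ℝ,
      (∀ t, x (t + 2) = A0.mulVec (x t) + A1.mulVec (x (t + 1)) + B.mulVec (u t)) →
      (∀ t, x' (t + 2) = A0.mulVec (x' t) + A1.mulVec (x' (t + 1)) + B.mulVec (u t)) →
      (∀ t, t < 2 * n → C.mulVec (x t) = C.mulVec (x' t)) →
      x 0 = x' 0 ∧ x 1 = x' 1) ↔
    (obsMat A0 A1 C).rank = 2 * n :=
  ⟨fun hobs => (stmt1_general A0 A1 C fun t => B.mulVec ((0 : ℕ → Fin r → ℝ) t)).1 (hobs 0),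
    fun hrank u => (stmt1_general A0 A1 C fun t => B.mulVec (u t)).2 hrank⟩
end

section
/- Let x : ℝ → ℝⁿ and u : ℝ → ℝʳ be infinitely differentiable functions satisfying x''(t) = A₀x(t) + A₁x'(t) + Bu(t) for all t. Then for every k ≥ 0 and every t, the (k+2)-nd derivative of x satisfies x^{(k+2)}(t) = S_k x(t) + P_k x'(t) + Σ_{j=0}^{k} M_{k−j} u^{(j)}(t). -/
/-- The matrix sequence `M₀ = B`, `M₁ = A₁B`, `M_k = A₀M_{k−2} + A₁M_{k−1}` for `k ≥ 2`. -/
noncomputable def Mseq {n r : ℕ} (A0 A1 : Matrix (Fin n) (Fin n) ℝ)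
    (B : Matrix (Fin n) (Fin r) ℝ) : ℕ → Matrix (Fin n) (Fin r) ℝ
  | 0 => B
  | 1 => A1 * B
  | k + 2 => A0 * Mseq A0 A1 B k + A1 * Mseq A0 A1 B (k + 1)

/-!
Differentiating `S_k x + P_k x' + ∑ M_{k-j} u^{(j)}` and substituting the equation for `x''` gives
`P_k A₀ x + (S_k + P_k A₁) x' + P_k B u + ∑ M_{k-j} u^{(j+1)}`. The first two coefficients are
`S_{k+1}` and `P_{k+1}` by definition, and the rest reindexes to the required sum because
`M_{k+1} = P_k B`. To see the latter, note that `P_{k+2} = P_k A₀ + P_{k+1} A₁` multiplies on the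
right while the recursion of `M` multiplies on the left; started at `A₁, A₀ + A₁²`, the two
recursions produce the same sequence.
-/

theorem add_two_eq_left_of_add_two_eq_right {R : Type*} [Semiring R] {a₀ a₁ : R} {p : ℕ → R}
    (p_zero : p 0 = a₁) (p_one : p 1 = a₀ + a₁ * a₁)
    (p_add_two : ∀ k, p (k + 2) = p k * a₀ + p (k + 1) * a₁) (k : ℕ) :
    p (k + 2) = a₀ * p k + a₁ * p (k + 1) := by
  induction k using Nat.twoStepInduction with
  | zero =>
    rw [p_add_two, p_one, p_zero]
    noncomm_ring
  | one =>
    rw [p_add_two, p_add_two 0, p_one, p_zero]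
    noncomm_ring
  | more k ih₀ ih₁ =>
    calc p (k + 4) = p (k + 2) * a₀ + p (k + 3) * a₁ := p_add_two (k + 2)
      _ = (a₀ * p k + a₁ * p (k + 1)) * a₀ + (a₀ * p (k + 1) + a₁ * p (k + 2)) * a₁ := by
        rw [← ih₀, ih₁]
      _ = a₀ * (p k * a₀ + p (k + 1) * a₁) + a₁ * (p (k + 1) * a₀ + p (k + 2) * a₁) := by
        noncomm_ring
      _ = a₀ * p (k + 2) + a₁ * p (k + 3) := by
        rw [← p_add_two, ← p_add_two]

section NormedSpace

variable {𝕜 E F : Type*} [NontriviallyNormedField 𝕜]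
  [NormedAddCommGroup E] [NormedSpace 𝕜 E] [NormedAddCommGroup F] [NormedSpace 𝕜 F]

/-- The sequences `S_k`, `P_k`, `M_k` of the equation `x'' = A₀ x + A₁ x' + B u` in normed spaces.
They are given by their recursions rather than as functions of `A₀`, `A₁` and `B`, so that the
matrix sequences `SPseq` and `Mseq` qualify once their terms are regarded as operators. -/
structure IsDerivCoeff (A₀ A₁ : E →L[𝕜] E) (B : F →L[𝕜] E) (S P : ℕ → E →L[𝕜] E)
    (M : ℕ → F →L[𝕜] E) : Prop where
  S_zero : S 0 = A₀
  P_zero : P 0 = A₁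
  S_succ (k : ℕ) : S (k + 1) = P k * A₀
  P_succ (k : ℕ) : P (k + 1) = S k + P k * A₁
  M_zero : M 0 = B
  M_one : M 1 = A₁ ∘L B
  M_add_two (k : ℕ) : M (k + 2) = A₀ ∘L M k + A₁ ∘L M (k + 1)

variable {A₀ A₁ : E →L[𝕜] E} {B : F →L[𝕜] E} {S P : ℕ → E →L[𝕜] E} {M : ℕ → F →L[𝕜] E}

namespace IsDerivCoeff

theorem P_add_two_right (h : IsDerivCoeff A₀ A₁ B S P M) (k : ℕ) :
    P (k + 2) = P k * A₀ + P (k + 1) * A₁ := by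
  rw [h.P_succ (k + 1), h.S_succ]

theorem P_add_two_left (h : IsDerivCoeff A₀ A₁ B S P M) (k : ℕ) :
    P (k + 2) = A₀ * P k + A₁ * P (k + 1) :=
  add_two_eq_left_of_add_two_eq_right h.P_zero (by rw [h.P_succ, h.S_zero, h.P_zero])
    h.P_add_two_right k

theorem M_succ (h : IsDerivCoeff A₀ A₁ B S P M) (k : ℕ) : M (k + 1) = P k ∘L B := by
  induction k using Nat.twoStepInduction with
  | zero => rw [h.M_one, h.P_zero]
  | one =>
    rw [h.M_add_two, h.M_zero, h.M_one, h.P_succ, h.S_zero, h.P_zero,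
      ContinuousLinearMap.add_comp, ContinuousLinearMap.mul_def, ContinuousLinearMap.comp_assoc]
  | more k ih₀ ih₁ =>
    rw [h.M_add_two, ih₀, ih₁, h.P_add_two_left, ContinuousLinearMap.add_comp,
      ContinuousLinearMap.mul_def, ContinuousLinearMap.mul_def, ContinuousLinearMap.comp_assoc,
      ContinuousLinearMap.comp_assoc]

end IsDerivCoeff

theorem hasDerivAt_iteratedDeriv {f : 𝕜 → E} {n : WithTop ℕ∞} (hf : ContDiff 𝕜 n f) {k : ℕ}
    (hk : k < n) (t : 𝕜) : HasDerivAt (iteratedDeriv k f) (iteratedDeriv (k + 1) f t) t := by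
  rw [iteratedDeriv_succ]
  exact (hf.differentiable_iteratedDeriv k hk t).hasDerivAt

theorem hasDerivAt_sum_clm_iteratedDeriv {u : 𝕜 → F} {k : ℕ} (hu : ContDiff 𝕜 k u)
    (L : ℕ → F →L[𝕜] E) (t : 𝕜) :
    HasDerivAt (fun s => ∑ j ∈ Finset.range k, L j (iteratedDeriv j u s))
      (∑ j ∈ Finset.range k, L j (iteratedDeriv (j + 1) u t)) t := by
  refine HasDerivAt.fun_sum fun j hj => (L j).hasFDerivAt.comp_hasDerivAt t ?_
  exact hasDerivAt_iteratedDeriv hu (mod_cast Finset.mem_range.mp hj) t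

variable {x v : 𝕜 → E} {u : 𝕜 → F}

theorem IsDerivCoeff.hasDerivAt_succ (h : IsDerivCoeff A₀ A₁ B S P M) {k : ℕ}
    (hu : ContDiff 𝕜 (k + 1 : ℕ) u) {t : 𝕜} (hx : HasDerivAt x (v t) t)
    (hv : HasDerivAt v (A₀ (x t) + A₁ (v t) + B (u t)) t) :
    HasDerivAt
      (fun s => S k (x s) + P k (v s)
        + ∑ j ∈ Finset.range (k + 1), M (k - j) (iteratedDeriv j u s))
      (S (k + 1) (x t) + P (k + 1) (v t)
        + ∑ j ∈ Finset.range (k + 2), M (k + 1 - j) (iteratedDeriv j u t)) t := by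
  have hsum : ∑ j ∈ Finset.range (k + 2), M (k + 1 - j) (iteratedDeriv j u t)
      = ∑ j ∈ Finset.range (k + 1), M (k - j) (iteratedDeriv (j + 1) u t) + P k (B (u t)) := by
    simp only [Finset.sum_range_succ' _ (k + 1), Nat.add_sub_add_right, Nat.sub_zero,
      iteratedDeriv_zero, h.M_succ, ContinuousLinearMap.comp_apply]
  have hvalue : S (k + 1) (x t) + P (k + 1) (v t)
      + ∑ j ∈ Finset.range (k + 2), M (k + 1 - j) (iteratedDeriv j u t)
      = S k (v t) + P k (A₀ (x t) + A₁ (v t) + B (u t))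
        + ∑ j ∈ Finset.range (k + 1), M (k - j) (iteratedDeriv (j + 1) u t) := by
    simp only [hsum, h.S_succ, h.P_succ, add_apply, mul_apply_eq_comp, map_add]
    abel
  rw [hvalue]
  exact (((S k).hasFDerivAt.comp_hasDerivAt t hx).add
    ((P k).hasFDerivAt.comp_hasDerivAt t hv)).add
    (hasDerivAt_sum_clm_iteratedDeriv hu (fun j => M (k - j)) t)

theorem stmt8_general (h : IsDerivCoeff A₀ A₁ B S P M) (hx : ∀ t, HasDerivAt x (v t) t)
    (hv : ∀ t, HasDerivAt v (A₀ (x t) + A₁ (v t) + B (u t)) t) (k : ℕ) (hu : ContDiff 𝕜 k u)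
    (t : 𝕜) :
    iteratedDeriv (k + 2) x t
      = S k (x t) + P k (v t) + ∑ j ∈ Finset.range (k + 1), M (k - j) (iteratedDeriv j u t) := by
  induction k generalizing t with
  | zero =>
    have hx' : deriv x = v := funext fun t => (hx t).deriv
    simp [iteratedDeriv_succ, hx', (hv t).deriv, h.S_zero, h.P_zero, h.M_zero]
  | succ k ih =>
    have hk := funext (ih (hu.of_le (mod_cast k.le_succ)))
    rw [show k + 1 + 2 = k + 2 + 1 from rfl, iteratedDeriv_succ, hk]
    exact (h.hasDerivAt_succ hu (hx t) (hv t)).deriv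

end NormedSpace

section Matrix

variable {R l m n : Type*} [CommSemiring R] [TopologicalSpace R] [IsTopologicalSemiring R]
  [Fintype n]

/-- The action of a matrix on column vectors, as a continuous linear map; it turns matrix
coefficients into the operator coefficients of `IsDerivCoeff`. -/
def mulVecCLM (A : Matrix m n R) : (n → R) →L[R] (m → R) where
  toLinearMap := A.mulVecLin
  cont := continuous_const.matrix_mulVec continuous_id

theorem mulVecCLM_add (A C : Matrix m n R) : mulVecCLM (A + C) = mulVecCLM A + mulVecCLM C :=
  ContinuousLinearMap.ext (Matrix.add_mulVec A C)

theorem mulVecCLM_mul [Fintype m] (A : Matrix l m R) (C : Matrix m n R) :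
    mulVecCLM (A * C) = mulVecCLM A ∘L mulVecCLM C :=
  ContinuousLinearMap.ext fun w => (Matrix.mulVec_mulVec w A C).symm

end Matrix

theorem isDerivCoeff_mulVecCLM {n r : ℕ} (A0 A1 : Matrix (Fin n) (Fin n) ℝ)
    (B : Matrix (Fin n) (Fin r) ℝ) :
    IsDerivCoeff (mulVecCLM A0) (mulVecCLM A1) (mulVecCLM B)
      (fun k => mulVecCLM (SPseq A0 A1 k).1) (fun k => mulVecCLM (SPseq A0 A1 k).2)
      (fun k => mulVecCLM (Mseq A0 A1 B k)) where
  S_zero := rfl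
  P_zero := rfl
  S_succ _ := mulVecCLM_mul _ _
  P_succ _ := by rw [SPseq, mulVecCLM_add, mulVecCLM_mul, ContinuousLinearMap.mul_def]
  M_zero := rfl
  M_one := mulVecCLM_mul _ _
  M_add_two _ := by rw [Mseq, mulVecCLM_add, mulVecCLM_mul, mulVecCLM_mul]

theorem stmt8 {n r : ℕ} (hn : 1 ≤ n) (hr : 1 ≤ r)
    (A0 A1 : Matrix (Fin n) (Fin n) ℝ) (B : Matrix (Fin n) (Fin r) ℝ)
    (x : ℝ → Fin n → ℝ) (u : ℝ → Fin r → ℝ)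
    (hx : ContDiff ℝ (⊤ : ℕ∞) x) (hu : ContDiff ℝ (⊤ : ℕ∞) u)
    (heq : ∀ t, iteratedDeriv 2 x t
      = A0.mulVec (x t) + A1.mulVec (deriv x t) + B.mulVec (u t)) :
    ∀ k t, iteratedDeriv (k + 2) x t
      = (SPseq A0 A1 k).1.mulVec (x t) + (SPseq A0 A1 k).2.mulVec (deriv x t)
        + ∑ j ∈ Finset.range (k + 1),
            (Mseq A0 A1 B (k - j)).mulVec (iteratedDeriv j u t) := by
  have hx₀ (t : ℝ) : HasDerivAt x (deriv x t) t := (hx.differentiable (by simp) t).hasDerivAt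
  have hx₁ (t : ℝ) : HasDerivAt (deriv x)
      (A0.mulVec (x t) + A1.mulVec (deriv x t) + B.mulVec (u t)) t := by
    simpa only [← heq, iteratedDeriv_one] using hasDerivAt_iteratedDeriv hx (k := 1) (by simp) t
  exact fun k => stmt8_general (isDerivCoeff_mulVecCLM A0 A1 B) hx₀ hx₁ k
    (hu.of_le (mod_cast le_top))
end

section
/- Theorem 3.1: Fix t₁ > 0. The second order linear continuous-time system x''(t) = A₀x(t) + A₁x'(t) + Bu(t) with measurements y(t) = Cx(t) is observable on [0, t₁] — i.e., for every infinitely differentiable input u : ℝ → ℝʳ, any two infinitely differentiable solutions x, x̃ of the differential equation with this same input for which Cx(t) = Cx̃(t) for all t ∈ [0, t₁] satisfy x(0) = x̃(0) and x'(0) = x̃'(0) — if and only if the observability matrix 𝒪(A₀,A₁,C) has rank 2n. -/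
/-!
In phase space `E × E` the system is first order with generator `T (v, w) = (w, A₀ v + A₁ w)` and
output map `D = C ∘ fst`. By linearity observability only concerns the unforced system, and there it
means that the unobservable subspace `⋂ₖ ker (D Tᵏ)` is trivial: differentiating `D z = 0` along a
solution gives `D Tᵏ z = 0` for all `k`, and conversely if `D Tᵏ v = 0` for all `k`, then
`D (exp (t T) v) = 0` by the exponential series. In finite dimension Cayley–Hamilton cuts the
intersection down to `k < dim (E × E) = 2n`, and `[C, 0] Tᵏ` is exactly the `k`-th block row of the
observability matrix, whose kernel is therefore the unobservable subspace.
-/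

section LinearAlgebra

variable {R V W : Type*} [CommRing R] [AddCommGroup V] [Module R V] [AddCommGroup W] [Module R W]

/-- The unobservable subspace of the linear system with generator `T` and output map `D`: the
states `v` that `D` cannot distinguish from `0` after any number of applications of `T`. -/
def unobservableSubspace (T : V →ₗ[R] V) (D : V →ₗ[R] W) : Submodule R V :=
  ⨅ k : ℕ, LinearMap.ker (D ∘ₗ T ^ k)

theorem mem_unobservableSubspace {T : V →ₗ[R] V} {D : V →ₗ[R] W} {v : V} :
    v ∈ unobservableSubspace T D ↔ ∀ k : ℕ, D (T^[k] v) = 0 := by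
  simp [unobservableSubspace, Module.End.pow_apply]

theorem mem_unobservableSubspace_iff_forall_lt_finrank [Nontrivial R] [Module.Free R V]
    [Module.Finite R V] {T : V →ₗ[R] V} {D : V →ₗ[R] W} {v : V} :
    v ∈ unobservableSubspace T D ↔ ∀ k < Module.finrank R V, D (T^[k] v) = 0 := by
  refine mem_unobservableSubspace.trans ⟨fun h k _ => h k, fun h k => ?_⟩
  have lt_finrank_of_mem_support : ∀ i ∈ (Polynomial.X ^ k %ₘ T.charpoly).support,
      i < Module.finrank R V := by
    intro i hi
    rw [← T.charpoly_natDegree, ← Nat.cast_lt (α := WithBot ℕ),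
      ← Polynomial.degree_eq_natDegree T.charpoly_monic.ne_zero]
    exact (Polynomial.le_degree_of_mem_supp i hi).trans_lt
      (Polynomial.degree_modByMonic_lt _ T.charpoly_monic)
  rw [← Module.End.pow_apply, T.pow_eq_aeval_mod_charpoly k, Polynomial.aeval_def,
    Polynomial.eval₂_eq_sum, Polynomial.sum_def, LinearMap.sum_apply, map_sum]
  refine Finset.sum_eq_zero fun i hi => ?_
  simp [Module.End.pow_apply, h i (lt_finrank_of_mem_support i hi)]

theorem rank_eq_card_iff_forall_mulVec_eq_zero {ι κ : Type*} [Nontrivial R] [Fintype ι]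
    (M : Matrix κ ι R) : M.rank = Fintype.card ι ↔ ∀ v, M.mulVec v = 0 → v = 0 := by
  rw [← Matrix.ker_mulVecLin_eq_bot_iff, LinearMap.ker_eq_bot, Matrix.coe_mulVecLin,
    Matrix.mulVec_injective_iff, linearIndependent_iff_card_eq_finrank_span,
    Matrix.rank_eq_finrank_span_cols, eq_comm]
  rfl

end LinearAlgebra

section FirstOrderSystem

theorem mem_unobservableSubspace_of_hasDerivAt {𝕜 E F : Type*} [NontriviallyNormedField 𝕜]
    [NormedAddCommGroup E] [NormedSpace 𝕜 E] [NormedAddCommGroup F] [NormedSpace 𝕜 F]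
    {T : E →L[𝕜] E} {D : E →L[𝕜] F} {z : 𝕜 → E} {s : Set 𝕜} (hs : IsOpen s)
    (hz : ∀ t ∈ s, HasDerivAt z (T (z t)) t) (hD : ∀ t ∈ s, D (z t) = 0) :
    ∀ t ∈ s, z t ∈ unobservableSubspace (T : E →ₗ[𝕜] E) (D : E →ₗ[𝕜] F) := by
  suffices h : ∀ k : ℕ, ∀ t ∈ s, (D ∘L T ^ k) (z t) = 0 from fun t ht =>
    mem_unobservableSubspace.mpr fun k => by simpa using h k t ht
  intro k
  induction k with
  | zero => simpa using hD
  | succ k ih =>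
    intro t ht
    have deriv_eq : HasDerivAt (fun τ => (D ∘L T ^ k) (z τ)) ((D ∘L T ^ k) (T (z t))) t :=
      (D ∘L T ^ k).hasFDerivAt.comp_hasDerivAt t (hz t ht)
    have deriv_zero : HasDerivAt (fun τ => (D ∘L T ^ k) (z τ)) 0 t :=
      (hasDerivAt_const t (0 : F)).congr_of_eventuallyEq <|
        Filter.eventuallyEq_of_mem (hs.mem_nhds ht) ih
    simpa [pow_succ] using deriv_eq.unique deriv_zero

variable {𝕜 E F : Type*} [RCLike 𝕜] [NormedAddCommGroup E] [NormedSpace 𝕜 E] [CompleteSpace E]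
  [NormedAddCommGroup F] [NormedSpace 𝕜 F]

theorem hasDerivAt_exp_smul_apply (T : E →L[𝕜] E) (v : E) (t : 𝕜) :
    HasDerivAt (fun τ : 𝕜 => NormedSpace.exp (τ • T) v) (T (NormedSpace.exp (t • T) v)) t :=
  (ContinuousLinearMap.apply 𝕜 E v).hasFDerivAt.comp_hasDerivAt t (hasDerivAt_exp_smul_const' T t)

theorem contDiff_exp_smul_apply (T : E →L[𝕜] E) (v : E) {m : WithTop ℕ∞} :
    ContDiff 𝕜 m fun t : 𝕜 => NormedSpace.exp (t • T) v := by
  have contDiff_exp : ContDiff 𝕜 m (NormedSpace.exp : (E →L[𝕜] E) → E →L[𝕜] E) :=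
    contDiff_iff_contDiffAt.mpr fun S => (NormedSpace.exp_analytic (𝕂 := 𝕜) S).contDiffAt
  exact (contDiff_exp.comp (contDiff_id.smul contDiff_const)).clm_apply contDiff_const

theorem apply_exp_smul_eq_zero_of_mem_unobservableSubspace {T : E →L[𝕜] E} {D : E →L[𝕜] F} {v : E}
    (hv : v ∈ unobservableSubspace (T : E →ₗ[𝕜] E) (D : E →ₗ[𝕜] F)) (t : 𝕜) :
    D (NormedSpace.exp (t • T) v) = 0 := by
  have output_iterate_eq_zero (k : ℕ) : D (T^[k] v) = 0 := mem_unobservableSubspace.mp hv k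
  have hasSum_output := (NormedSpace.exp_series_hasSum_exp' (𝕂 := 𝕜) (t • T)).mapL
    (D ∘L ContinuousLinearMap.apply 𝕜 E v)
  refine hasSum_output.unique (hasSum_zero.congr_fun fun k => ?_)
  simp [smul_pow, output_iterate_eq_zero]

end FirstOrderSystem

section SecondOrderSystem

/-- The generator of the first order system in phase space `E × E` (position, velocity)
equivalent to `x'' = A₀ x + A₁ x'`. -/
def phaseGenerator {𝕜 E : Type*} [NontriviallyNormedField 𝕜] [NormedAddCommGroup E]
    [NormedSpace 𝕜 E] (A₀ A₁ : E →L[𝕜] E) : E × E →L[𝕜] E × E :=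
  (ContinuousLinearMap.snd 𝕜 E E).prod (A₀.coprod A₁)

/-- The unobservable subspace in phase space of the system `x'' = A₀ x + A₁ x'` with output
`y = C x`; its triviality is the algebraic form of observability. -/
def unobservablePhaseSubspace {𝕜 E F : Type*} [NontriviallyNormedField 𝕜] [NormedAddCommGroup E]
    [NormedSpace 𝕜 E] [NormedAddCommGroup F] [NormedSpace 𝕜 F] (A₀ A₁ : E →L[𝕜] E)
    (C : E →L[𝕜] F) : Submodule 𝕜 (E × E) :=
  unobservableSubspace (phaseGenerator A₀ A₁ : E × E →ₗ[𝕜] E × E)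
    (C ∘L ContinuousLinearMap.fst 𝕜 E E : E × E →ₗ[𝕜] F)

/-- The system `x'' = A₀ x + A₁ x' + B u` with output `y = C x` is observable on `s`: under a common
smooth input, solutions whose outputs agree on `s` have the same position and velocity at time
`t₀`. -/
def IsObservableOn {𝕜 E F G : Type*} [NontriviallyNormedField 𝕜] [NormedAddCommGroup E]
    [NormedSpace 𝕜 E] [NormedAddCommGroup F] [NormedSpace 𝕜 F] [NormedAddCommGroup G]
    [NormedSpace 𝕜 G] (A₀ A₁ : E →L[𝕜] E) (B : G →L[𝕜] E) (C : E →L[𝕜] F) (s : Set 𝕜) (t₀ : 𝕜) :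
    Prop :=
  ∀ u : 𝕜 → G, ContDiff 𝕜 (⊤ : ℕ∞) u → ∀ x x' : 𝕜 → E,
    ContDiff 𝕜 (⊤ : ℕ∞) x → ContDiff 𝕜 (⊤ : ℕ∞) x' →
    (∀ t, iteratedDeriv 2 x t = A₀ (x t) + A₁ (deriv x t) + B (u t)) →
    (∀ t, iteratedDeriv 2 x' t = A₀ (x' t) + A₁ (deriv x' t) + B (u t)) →
    (∀ t ∈ s, C (x t) = C (x' t)) →
    x t₀ = x' t₀ ∧ deriv x t₀ = deriv x' t₀

section PhaseSpace

variable {𝕜 E : Type*} [NontriviallyNormedField 𝕜] [NormedAddCommGroup E] [NormedSpace 𝕜 E]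
  {A₀ A₁ : E →L[𝕜] E}

@[simp]
theorem phaseGenerator_apply (z : E × E) : phaseGenerator A₀ A₁ z = (z.2, A₀ z.1 + A₁ z.2) :=
  rfl

theorem hasDerivAt_prodMk_deriv {x : 𝕜 → E} (hx : ContDiff 𝕜 2 x) {t : 𝕜}
    (hode : iteratedDeriv 2 x t = A₀ (x t) + A₁ (deriv x t)) :
    HasDerivAt (fun τ => (x τ, deriv x τ)) (phaseGenerator A₀ A₁ (x t, deriv x t)) t := by
  rw [iteratedDeriv_succ, iteratedDeriv_one] at hode
  rw [phaseGenerator_apply, ← hode]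
  exact (hx.differentiable two_ne_zero t).hasDerivAt.prodMk
    (hx.differentiable_deriv_two t).hasDerivAt

theorem deriv_fst_of_hasDerivAt_phaseGenerator {z : 𝕜 → E × E}
    (hz : ∀ t, HasDerivAt z (phaseGenerator A₀ A₁ (z t)) t) :
    deriv (fun t => (z t).1) = fun t => (z t).2 :=
  funext fun t => ((ContinuousLinearMap.fst 𝕜 E E).hasFDerivAt.comp_hasDerivAt t (hz t)).deriv

theorem iteratedDeriv_two_fst_of_hasDerivAt_phaseGenerator {z : 𝕜 → E × E}
    (hz : ∀ t, HasDerivAt z (phaseGenerator A₀ A₁ (z t)) t) (t : 𝕜) :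
    iteratedDeriv 2 (fun t => (z t).1) t = A₀ (z t).1 + A₁ (z t).2 := by
  rw [iteratedDeriv_succ, iteratedDeriv_one, deriv_fst_of_hasDerivAt_phaseGenerator hz]
  exact ((ContinuousLinearMap.snd 𝕜 E E).hasFDerivAt.comp_hasDerivAt t (hz t)).deriv

end PhaseSpace

variable {𝕜 E F G : Type*} [RCLike 𝕜] [NormedAddCommGroup E] [NormedSpace 𝕜 E]
  [NormedAddCommGroup F] [NormedSpace 𝕜 F] [NormedAddCommGroup G] [NormedSpace 𝕜 G]
  {A₀ A₁ : E →L[𝕜] E} {B : G →L[𝕜] E} {C : E →L[𝕜] F} {s : Set 𝕜} {t₀ : 𝕜}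

theorem IsObservableOn.unobservablePhaseSubspace_eq_bot [CompleteSpace E]
    (h : IsObservableOn A₀ A₁ B C s t₀) :
    unobservablePhaseSubspace A₀ A₁ C = ⊥ := by
  rw [Submodule.eq_bot_iff]
  intro v hv
  let z : 𝕜 → E × E := fun t => NormedSpace.exp ((t - t₀) • phaseGenerator A₀ A₁) v
  have hasDerivAt_z (t : 𝕜) : HasDerivAt z (phaseGenerator A₀ A₁ (z t)) t :=
    (hasDerivAt_exp_smul_apply (phaseGenerator A₀ A₁) v (t - t₀)).comp_sub_const t t₀
  have contDiff_z : ContDiff 𝕜 (⊤ : ℕ∞) z :=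
    (contDiff_exp_smul_apply (phaseGenerator A₀ A₁) v).comp (contDiff_id.sub contDiff_const)
  have output_z (t : 𝕜) : C (z t).1 = 0 :=
    apply_exp_smul_eq_zero_of_mem_unobservableSubspace hv (t - t₀)
  have deriv_z := deriv_fst_of_hasDerivAt_phaseGenerator hasDerivAt_z
  obtain ⟨position_eq, velocity_eq⟩ := h 0 contDiff_const (fun t => (z t).1) 0 contDiff_z.fst
    contDiff_const
    (fun t => by
      simpa [deriv_z] using iteratedDeriv_two_fst_of_hasDerivAt_phaseGenerator hasDerivAt_z t)
    (fun t => by simp)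
    (fun t _ => by simp [output_z])
  have z_eq_zero : z t₀ = 0 := Prod.ext position_eq (by simpa [deriv_z] using velocity_eq)
  simpa [z] using z_eq_zero

theorem isObservableOn_of_unobservablePhaseSubspace_eq_bot (ht₀ : t₀ ∈ closure (interior s))
    (h : unobservablePhaseSubspace A₀ A₁ C = ⊥) :
    IsObservableOn A₀ A₁ B C s t₀ := by
  intro u _ x x' hx hx' hode hode' hout
  have hx2 : ContDiff 𝕜 2 x := contDiff_infty.mp hx 2
  have hx2' : ContDiff 𝕜 2 x' := contDiff_infty.mp hx' 2
  have deriv_sub_eq (t : 𝕜) : deriv (x - x') t = deriv x t - deriv x' t :=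
    deriv_sub (hx2.differentiable two_ne_zero t) (hx2'.differentiable two_ne_zero t)
  have hode_sub (t : 𝕜) :
      iteratedDeriv 2 (x - x') t = A₀ ((x - x') t) + A₁ (deriv (x - x') t) := by
    rw [iteratedDeriv_sub hx2.contDiffAt hx2'.contDiffAt, hode, hode', deriv_sub_eq, Pi.sub_apply,
      map_sub, map_sub]
    abel
  have eqOn_interior : Set.EqOn (fun t => ((x - x') t, deriv (x - x') t)) 0 (interior s) :=
    fun t ht => (Submodule.mem_bot 𝕜).mp <| h ▸ mem_unobservableSubspace_of_hasDerivAt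
      isOpen_interior (fun τ _ => hasDerivAt_prodMk_deriv (hx2.sub hx2') (hode_sub τ))
      (fun τ hτ => by simp [hout τ (interior_subset hτ)]) t ht
  have continuous_phase : Continuous fun t => ((x - x') t, deriv (x - x') t) :=
    (hx2.sub hx2').continuous.prodMk (hx2.sub hx2').differentiable_deriv_two.continuous
  have phase_eq_zero := eqOn_interior.closure continuous_phase continuous_const ht₀
  simpa [deriv_sub_eq, sub_eq_zero] using phase_eq_zero

theorem isObservableOn_iff_unobservablePhaseSubspace_eq_bot [CompleteSpace E]
    (ht₀ : t₀ ∈ closure (interior s)) :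
    IsObservableOn A₀ A₁ B C s t₀ ↔ unobservablePhaseSubspace A₀ A₁ C = ⊥ :=
  ⟨IsObservableOn.unobservablePhaseSubspace_eq_bot,
    isObservableOn_of_unobservablePhaseSubspace_eq_bot ht₀⟩

end SecondOrderSystem

section ObservabilityMatrix

variable {n p : ℕ} (A0 A1 : Matrix (Fin n) (Fin n) ℝ) (C : Matrix (Fin p) (Fin n) ℝ)

theorem obsBlockL_succ (k : ℕ) : obsBlockL A0 A1 C (k + 1) = obsBlockR A0 A1 C k * A0 := by
  rcases k with _ | _ | k <;> simp [obsBlockL, obsBlockR, SPseq, Matrix.mul_assoc]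

theorem obsBlockR_succ (k : ℕ) :
    obsBlockR A0 A1 C (k + 1) = obsBlockL A0 A1 C k + obsBlockR A0 A1 C k * A1 := by
  rcases k with _ | _ | k <;> simp [obsBlockL, obsBlockR, SPseq, Matrix.mul_assoc, Matrix.mul_add]

theorem obsBlockL_mulVec_add_obsBlockR_mulVec (k : ℕ) (v w : Fin n → ℝ) :
    (obsBlockL A0 A1 C k).mulVec v + (obsBlockR A0 A1 C k).mulVec w =
      C.mulVec ((phaseGenerator A0.mulVecLin.toContinuousLinearMap
        A1.mulVecLin.toContinuousLinearMap)^[k] (v, w)).1 := by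
  induction k generalizing v w with
  | zero => simp [obsBlockL, obsBlockR]
  | succ k ih =>
    rw [Function.iterate_succ_apply, phaseGenerator_apply, ← ih, obsBlockL_succ, obsBlockR_succ]
    simp only [LinearMap.coe_toContinuousLinearMap', Matrix.mulVecLin_apply, Matrix.add_mulVec,
      Matrix.mulVec_add, Matrix.mulVec_mulVec]
    abel

theorem obsMat_mulVec_sumElim_eq_zero_iff (z : (Fin n → ℝ) × (Fin n → ℝ)) :
    (obsMat A0 A1 C).mulVec (Sum.elim z.1 z.2) = 0 ↔
      z ∈ unobservablePhaseSubspace A0.mulVecLin.toContinuousLinearMap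
        A1.mulVecLin.toContinuousLinearMap C.mulVecLin.toContinuousLinearMap := by
  have mulVec_apply (k : Fin (2 * n)) (q : Fin p) :
      (obsMat A0 A1 C).mulVec (Sum.elim z.1 z.2) (k, q) =
        ((obsBlockL A0 A1 C k).mulVec z.1 + (obsBlockR A0 A1 C k).mulVec z.2) q := by
    simp [obsMat, Matrix.mulVec, dotProduct]
  have finrank_eq : Module.finrank ℝ ((Fin n → ℝ) × (Fin n → ℝ)) = 2 * n := by simp [two_mul]
  rw [unobservablePhaseSubspace, mem_unobservableSubspace_iff_forall_lt_finrank, finrank_eq,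
    funext_iff, Prod.forall]
  simp only [mulVec_apply, obsBlockL_mulVec_add_obsBlockR_mulVec]
  exact (forall_congr' fun k => funext_iff.symm).trans Fin.forall_iff

theorem unobservablePhaseSubspace_eq_bot_iff_rank_obsMat :
    unobservablePhaseSubspace A0.mulVecLin.toContinuousLinearMap
        A1.mulVecLin.toContinuousLinearMap C.mulVecLin.toContinuousLinearMap = ⊥ ↔
      (obsMat A0 A1 C).rank = 2 * n := by
  have card_eq : Fintype.card (Fin n ⊕ Fin n) = 2 * n := by simp [two_mul]
  have rank_iff := rank_eq_card_iff_forall_mulVec_eq_zero (obsMat A0 A1 C)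
  rw [card_eq] at rank_iff
  have sumElim_eq_zero_iff (z : (Fin n → ℝ) × (Fin n → ℝ)) : Sum.elim z.1 z.2 = 0 ↔ z = 0 := by
    rw [← Sum.elim_zero_zero, Sum.elim_eq_iff, Prod.ext_iff, Prod.fst_zero, Prod.snd_zero]
  rw [rank_iff, Submodule.eq_bot_iff,
    (Equiv.sumArrowEquivProdArrow (Fin n) (Fin n) ℝ).symm.surjective.forall]
  refine forall_congr' fun z => ?_
  rw [← obsMat_mulVec_sumElim_eq_zero_iff, ← sumElim_eq_zero_iff]
  rfl

end ObservabilityMatrix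

theorem stmt9_general {n r p : ℕ} (A0 A1 : Matrix (Fin n) (Fin n) ℝ)
    (B : Matrix (Fin n) (Fin r) ℝ) (C : Matrix (Fin p) (Fin n) ℝ) {s : Set ℝ} {t₀ : ℝ}
    (ht₀ : t₀ ∈ closure (interior s)) :
    IsObservableOn A0.mulVecLin.toContinuousLinearMap A1.mulVecLin.toContinuousLinearMap
        B.mulVecLin.toContinuousLinearMap C.mulVecLin.toContinuousLinearMap s t₀ ↔
      (obsMat A0 A1 C).rank = 2 * n :=
  (isObservableOn_iff_unobservablePhaseSubspace_eq_bot ht₀).trans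
    (unobservablePhaseSubspace_eq_bot_iff_rank_obsMat A0 A1 C)

theorem stmt9 {n r p : ℕ} (hn : 2 ≤ n) (hr : 1 ≤ r) (hp : 1 ≤ p)
    (A0 A1 : Matrix (Fin n) (Fin n) ℝ) (B : Matrix (Fin n) (Fin r) ℝ)
    (C : Matrix (Fin p) (Fin n) ℝ) (t₁ : ℝ) (ht₁ : 0 < t₁) :
    (∀ u : ℝ → Fin r → ℝ, ContDiff ℝ (⊤ : ℕ∞) u → ∀ x x' : ℝ → Fin n → ℝ,
      ContDiff ℝ (⊤ : ℕ∞) x → ContDiff ℝ (⊤ : ℕ∞) x' →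
      (∀ t, iteratedDeriv 2 x t
        = A0.mulVec (x t) + A1.mulVec (deriv x t) + B.mulVec (u t)) →
      (∀ t, iteratedDeriv 2 x' t
        = A0.mulVec (x' t) + A1.mulVec (deriv x' t) + B.mulVec (u t)) →
      (∀ t ∈ Set.Icc (0 : ℝ) t₁, C.mulVec (x t) = C.mulVec (x' t)) →
      x 0 = x' 0 ∧ deriv x 0 = deriv x' 0) ↔
    (obsMat A0 A1 C).rank = 2 * n :=
  stmt9_general A0 A1 B C (by simp [closure_Ioo ht₁.ne, ht₁.le])
end

section
/- Theorem 4.1: The second order linear discrete-time system x_{t+2} = A₀x_t + A₁x_{t+1} + Bu_t is controllable — i.e., for every pair of initial states a₀, a₁ ∈ ℝⁿ and every target x_f ∈ ℝⁿ there exist control vectors u₀, u₁, …, u_{n−1} ∈ ℝʳ such that the solution of the recurrence with x₀ = a₀, x₁ = a₁ and these inputs satisfies x_{n+1} = x_f — if and only if the controllability matrix 𝒞(A₀,A₁,B) has rank n. -/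
/-- The `n × (nr)` controllability matrix `𝒞(A₀, A₁, B) = [M₀ M₁ ⋯ M_{n−1}]`. -/
noncomputable def ctrbMat {n r : ℕ} (A0 A1 : Matrix (Fin n) (Fin n) ℝ)
    (B : Matrix (Fin n) (Fin r) ℝ) : Matrix (Fin n) (Fin n × Fin r) ℝ :=
  fun i jk => Mseq A0 A1 B (jk.1 : ℕ) i jk.2

/-!
The free response depends only on the initial states, and the input `u t` enters the state at time
`t + k + 2` through `M_k`. Hence the states reachable at time `N + 1` from given initial states
form a translate of the column space of `[M₀ M₁ ⋯ M_{N-1}]`, and they fill the whole space exactly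
when this matrix has full row rank.
-/

open Matrix

section Semiring

variable {R m p : Type*} [Semiring R] [Fintype m]

/-- The solution of `x_{t+2} = A₀x_t + A₁x_{t+1} + w_t` with `x₀ = a₀` and `x₁ = a₁`. Taking
`w = 0` gives the free response. -/
def secondOrderSol (A₀ A₁ : Matrix m m R) (a₀ a₁ : m → R) (w : ℕ → m → R) : ℕ → m → R
  | 0 => a₀
  | 1 => a₁
  | t + 2 => A₀ *ᵥ secondOrderSol A₀ A₁ a₀ a₁ w t +
      A₁ *ᵥ secondOrderSol A₀ A₁ a₀ a₁ w (t + 1) + w t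

theorem secondOrderSol_add_two (A₀ A₁ : Matrix m m R) (a₀ a₁ : m → R) (w : ℕ → m → R) (t : ℕ) :
    secondOrderSol A₀ A₁ a₀ a₁ w (t + 2) =
      A₀ *ᵥ secondOrderSol A₀ A₁ a₀ a₁ w t + A₁ *ᵥ secondOrderSol A₀ A₁ a₀ a₁ w (t + 1) + w t :=
  rfl

/-- The impulse response of `x_{t+2} = A₀x_t + A₁x_{t+1} + Bu_t`: the sequence `M_k` of `Mseq`,
over an arbitrary semiring and with arbitrary index types for states and inputs. -/
def impulseResponse (A₀ A₁ : Matrix m m R) (B : Matrix m p R) : ℕ → Matrix m p R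
  | 0 => B
  | 1 => A₁ * B
  | k + 2 => A₀ * impulseResponse A₀ A₁ B k + A₁ * impulseResponse A₀ A₁ B (k + 1)

/-- The controllability matrix `[M₀ M₁ ⋯ M_{N-1}]` with an arbitrary number `N` of blocks; the
column index `(k, j)` stands for the `j`-th column of `M_k`. -/
def controllabilityMatrix (A₀ A₁ : Matrix m m R) (B : Matrix m p R) (N : ℕ) :
    Matrix m (Fin N × p) R :=
  .of fun i kj => impulseResponse A₀ A₁ B kj.1 i kj.2

variable [Fintype p]

/-- The forced response `∑_{i<k} M_i u_{k-1-i}`: the contribution of the inputs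
`u₀, …, u_{k-1}` to the state at time `k + 1`. -/
def forcedResponse (A₀ A₁ : Matrix m m R) (B : Matrix m p R) (u : ℕ → p → R) (k : ℕ) : m → R :=
  ∑ i : Fin k, impulseResponse A₀ A₁ B i *ᵥ u i.rev

theorem forcedResponse_zero (A₀ A₁ : Matrix m m R) (B : Matrix m p R) (u : ℕ → p → R) :
    forcedResponse A₀ A₁ B u 0 = 0 :=
  Fin.sum_univ_zero _

theorem forcedResponse_one (A₀ A₁ : Matrix m m R) (B : Matrix m p R) (u : ℕ → p → R) :
    forcedResponse A₀ A₁ B u 1 = B *ᵥ u 0 :=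
  Fin.sum_univ_one _

theorem forcedResponse_add_two (A₀ A₁ : Matrix m m R) (B : Matrix m p R) (u : ℕ → p → R) (k : ℕ) :
    forcedResponse A₀ A₁ B u (k + 2) =
      A₀ *ᵥ forcedResponse A₀ A₁ B u k + A₁ *ᵥ forcedResponse A₀ A₁ B u (k + 1) +
        B *ᵥ u (k + 1) := by
  simp only [forcedResponse, Fin.sum_univ_succ, Fin.rev_zero, Fin.rev_succ, Fin.val_zero,
    Fin.val_succ, Fin.val_last, Fin.val_castSucc, zero_add, impulseResponse, add_mulVec,
    mulVec_add, mulVec_sum, mulVec_mulVec, Finset.sum_add_distrib]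
  abel

theorem eq_secondOrderSol_add_forcedResponse {A₀ A₁ : Matrix m m R} {B : Matrix m p R}
    {u : ℕ → p → R} {x : ℕ → m → R}
    (hx : ∀ t, x (t + 2) = A₀ *ᵥ x t + A₁ *ᵥ x (t + 1) + B *ᵥ u t) (k : ℕ) :
    x (k + 1) = secondOrderSol A₀ A₁ (x 0) (x 1) 0 (k + 1) + forcedResponse A₀ A₁ B u k := by
  induction k using Nat.twoStepInduction with
  | zero => simp only [secondOrderSol, forcedResponse_zero, add_zero]
  | one => simp only [hx 0, secondOrderSol, forcedResponse_one, Pi.zero_apply, add_zero]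
  | more k ih₀ ih₁ =>
    rw [hx (k + 1), ih₀, ih₁, forcedResponse_add_two, mulVec_add, mulVec_add,
      secondOrderSol_add_two _ _ _ _ _ (k + 1), Pi.zero_apply]
    abel

theorem controllabilityMatrix_mulVec (A₀ A₁ : Matrix m m R) (B : Matrix m p R) {N : ℕ}
    (v : Fin N × p → R) :
    controllabilityMatrix A₀ A₁ B N *ᵥ v =
      ∑ k : Fin N, impulseResponse A₀ A₁ B k *ᵥ fun j => v (k, j) := by
  ext i
  simp only [controllabilityMatrix, mulVec, dotProduct, of_apply, Fintype.sum_prod_type,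
    Finset.sum_apply]

theorem range_forcedResponse (A₀ A₁ : Matrix m m R) (B : Matrix m p R) (N : ℕ) :
    Set.range (fun u => forcedResponse A₀ A₁ B u N) =
      Set.range (controllabilityMatrix A₀ A₁ B N).mulVec := by
  apply Set.Subset.antisymm
  · rintro _ ⟨u, rfl⟩
    exact ⟨fun kj => u kj.1.rev kj.2, controllabilityMatrix_mulVec A₀ A₁ B _⟩
  · rintro _ ⟨v, rfl⟩
    -- Block `k` of `v` is applied at time `N - 1 - k`; the inputs from time `N` on are irrelevant.
    let u : ℕ → p → R := Function.extend Fin.val (fun i : Fin N => fun j => v (i.rev, j)) 0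
    have hu (k : Fin N) : u k.rev = fun j => v (k, j) := by
      simp only [u, Fin.val_injective.extend_apply, Fin.rev_rev]
    refine ⟨u, ?_⟩
    simp only [forcedResponse, hu, controllabilityMatrix_mulVec]

theorem exists_solution_iff_exists_forcedResponse (A₀ A₁ : Matrix m m R) (B : Matrix m p R)
    (N : ℕ) (a₀ a₁ xf : m → R) :
    (∃ u : ℕ → p → R, ∃ x : ℕ → m → R, x 0 = a₀ ∧ x 1 = a₁ ∧
      (∀ t, x (t + 2) = A₀ *ᵥ x t + A₁ *ᵥ x (t + 1) + B *ᵥ u t) ∧ x (N + 1) = xf) ↔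
    ∃ u, secondOrderSol A₀ A₁ a₀ a₁ 0 (N + 1) + forcedResponse A₀ A₁ B u N = xf := by
  refine exists_congr fun u => ⟨?_, fun hxf => ?_⟩
  · rintro ⟨x, rfl, rfl, hx, rfl⟩
    exact (eq_secondOrderSol_add_forcedResponse hx N).symm
  · let x := secondOrderSol A₀ A₁ a₀ a₁ fun t => B *ᵥ u t
    have hx (t : ℕ) : x (t + 2) = A₀ *ᵥ x t + A₁ *ᵥ x (t + 1) + B *ᵥ u t :=
      secondOrderSol_add_two A₀ A₁ a₀ a₁ _ t
    exact ⟨x, rfl, rfl, hx, (eq_secondOrderSol_add_forcedResponse hx N).trans hxf⟩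

end Semiring

theorem forall_exists_solution_iff_mulVec_surjective {R m p : Type*} [Ring R] [Fintype m]
    [Fintype p] (A₀ A₁ : Matrix m m R) (B : Matrix m p R) (N : ℕ) :
    (∀ a₀ a₁ xf : m → R, ∃ u : ℕ → p → R, ∃ x : ℕ → m → R, x 0 = a₀ ∧ x 1 = a₁ ∧
      (∀ t, x (t + 2) = A₀ *ᵥ x t + A₁ *ᵥ x (t + 1) + B *ᵥ u t) ∧ x (N + 1) = xf) ↔
    Function.Surjective (controllabilityMatrix A₀ A₁ B N).mulVec := by
  simp only [exists_solution_iff_exists_forcedResponse]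
  rw [← Set.range_eq_univ, ← range_forcedResponse, Set.range_eq_univ]
  constructor
  · intro h y
    obtain ⟨u, hu⟩ := h 0 0 (secondOrderSol A₀ A₁ 0 0 0 (N + 1) + y)
    exact ⟨u, add_left_cancel hu⟩
  · intro h a₀ a₁ xf
    obtain ⟨u, hu⟩ := h (-secondOrderSol A₀ A₁ a₀ a₁ 0 (N + 1) + xf)
    exact ⟨u, add_eq_of_eq_neg_add hu⟩

theorem rank_eq_card_iff_mulVec_surjective {K m l : Type*} [Field K] [Fintype m] [Fintype l]
    (C : Matrix m l K) : C.rank = Fintype.card m ↔ Function.Surjective C.mulVec := by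
  rw [rank, ← Module.finrank_fintype_fun_eq_card K, ← Submodule.eq_top_iff_finrank_eq,
    LinearMap.range_eq_top, coe_mulVecLin]

theorem stmt10_general {K m p : Type*} [Field K] [Fintype m] [Fintype p]
    (A₀ A₁ : Matrix m m K) (B : Matrix m p K) (N : ℕ) :
    (∀ a₀ a₁ xf : m → K, ∃ u : ℕ → p → K, ∃ x : ℕ → m → K, x 0 = a₀ ∧ x 1 = a₁ ∧
      (∀ t, x (t + 2) = A₀ *ᵥ x t + A₁ *ᵥ x (t + 1) + B *ᵥ u t) ∧ x (N + 1) = xf) ↔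
    (controllabilityMatrix A₀ A₁ B N).rank = Fintype.card m := by
  rw [forall_exists_solution_iff_mulVec_surjective, rank_eq_card_iff_mulVec_surjective]

section Real

variable {n r : ℕ} (A₀ A₁ : Matrix (Fin n) (Fin n) ℝ) (B : Matrix (Fin n) (Fin r) ℝ)

theorem Mseq_eq_impulseResponse (k : ℕ) : Mseq A₀ A₁ B k = impulseResponse A₀ A₁ B k := by
  induction k using Nat.twoStepInduction with
  | zero => rfl
  | one => rfl
  | more k ih₀ ih₁ => rw [Mseq, impulseResponse, ih₀, ih₁]

theorem ctrbMat_eq_controllabilityMatrix : ctrbMat A₀ A₁ B = controllabilityMatrix A₀ A₁ B n := by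
  ext i kj
  rw [ctrbMat, Mseq_eq_impulseResponse, controllabilityMatrix, of_apply]

end Real

theorem stmt10 {n r : ℕ} (hn : 1 ≤ n) (hr : 1 ≤ r)
    (A0 A1 : Matrix (Fin n) (Fin n) ℝ) (B : Matrix (Fin n) (Fin r) ℝ) :
    (∀ a0 a1 xf : Fin n → ℝ, ∃ u : ℕ → Fin r → ℝ, ∃ x : ℕ → Fin n → ℝ,
      x 0 = a0 ∧ x 1 = a1 ∧
      (∀ t, x (t + 2) = A0.mulVec (x t) + A1.mulVec (x (t + 1)) + B.mulVec (u t)) ∧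
      x (n + 1) = xf) ↔
    (ctrbMat A0 A1 B).rank = n := by
  rw [stmt10_general, ctrbMat_eq_controllabilityMatrix, Fintype.card_fin]
end

section
/- For a scalar-input system (r = 1, B = b a column vector), suppose the n×n controllability matrix 𝒞(A₀,A₁,b) = [M₀ M₁ ⋯ M_{n−1}] is invertible. Then for any infinitely differentiable x : ℝ → ℝⁿ and u : ℝ → ℝ satisfying x''(t) = A₀x(t) + A₁x'(t) + b·u(t) for all t, the column vector (u^{(n−1)}(t), …, u'(t), u(t))ᵀ equals 𝒞(A₀,A₁,b)⁻¹·(x^{(n+1)}(t) − S_{n−1}x(t) − P_{n−1}x'(t)) for every t; in particular the input u is uniquely determined by the solution x. -/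
/-- For a scalar-input system the controllability matrix `𝒞(A₀, A₁, b)` is the `n × n`
matrix whose columns are `M₀, M₁, …, M_{n−1}`. -/
noncomputable def ctrbSq {n : ℕ} (A0 A1 : Matrix (Fin n) (Fin n) ℝ)
    (b : Matrix (Fin n) (Fin 1) ℝ) : Matrix (Fin n) (Fin n) ℝ :=
  fun i j => Mseq A0 A1 b (j : ℕ) i 0

/-!
Writing `x⁽ᵏ⁺²⁾` in terms of `x`, `x'` and the derivatives of the input is pure algebra once the
system has been differentiated: every solution of `y_{k+2} = A₀ y_k + A₁ y_{k+1} + B v_k` satisfies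
`y_{k+2} = S_k y₀ + P_k y₁ + ∑_{i+j=k} M_i v_j`, because `M_{k+1} = P_k B`. For a scalar input and
`k = n - 1` the sum is `𝒞` applied to the vector of input derivatives, so inverting `𝒞` recovers
them. Invertibility of `𝒞` also gives its first column `b` a left inverse, so `u` is a linear
function of `x'' - A₀x - A₁x'`: it is determined by `x` and inherits its regularity.
-/

open Matrix Finset

section Recurrence

variable {n r : ℕ} {A0 A1 : Matrix (Fin n) (Fin n) ℝ} {B : Matrix (Fin n) (Fin r) ℝ}

theorem eq_SPseq_mul_add_of_recurrence {ι : Type*} {Y : ℕ → Matrix (Fin n) ι ℝ}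
    (hY : ∀ k, Y (k + 2) = A0 * Y k + A1 * Y (k + 1)) (k : ℕ) :
    Y (k + 2) = (SPseq A0 A1 k).1 * Y 0 + (SPseq A0 A1 k).2 * Y 1 := by
  induction k generalizing Y with
  | zero => exact hY 0
  | succ k ih =>
    have hshift : Y (k + 3) = (SPseq A0 A1 k).1 * Y 1 + (SPseq A0 A1 k).2 * Y 2 :=
      ih (Y := fun j => Y (j + 1)) fun j => hY (j + 1)
    rw [hshift, hY 0]
    simp only [SPseq, Matrix.mul_add, Matrix.add_mul, Matrix.mul_assoc]
    abel

theorem Mseq_succ_eq_SPseq_snd_mul (k : ℕ) :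
    Mseq A0 A1 B (k + 1) = (SPseq A0 A1 k).2 * B := by
  cases k with
  | zero => rfl
  | succ k =>
    rw [eq_SPseq_mul_add_of_recurrence (Y := Mseq A0 A1 B) (fun _ => rfl) k]
    simp only [Mseq, SPseq, Matrix.add_mul, Matrix.mul_assoc]

theorem eq_SPseq_mulVec_add_sum_of_recurrence {y : ℕ → Fin n → ℝ} {v : ℕ → Fin r → ℝ} {k : ℕ}
    (hy : ∀ j ≤ k, y (j + 2) = A0 *ᵥ y j + A1 *ᵥ y (j + 1) + B *ᵥ v j) :
    y (k + 2) = (SPseq A0 A1 k).1 *ᵥ y 0 + (SPseq A0 A1 k).2 *ᵥ y 1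
      + ∑ p ∈ antidiagonal k, Mseq A0 A1 B p.1 *ᵥ v p.2 := by
  induction k generalizing y v with
  | zero => simpa [SPseq, Mseq] using hy 0 le_rfl
  | succ k ih =>
    have hshift : y (k + 3) = (SPseq A0 A1 k).1 *ᵥ y 1 + (SPseq A0 A1 k).2 *ᵥ y 2
        + ∑ p ∈ antidiagonal k, Mseq A0 A1 B p.1 *ᵥ v (p.2 + 1) :=
      ih (y := fun j => y (j + 1)) (v := fun j => v (j + 1))
        fun j hj => hy (j + 1) (Nat.succ_le_succ hj)
    rw [hshift, hy 0 (Nat.zero_le _), Finset.Nat.sum_antidiagonal_succ',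
      Mseq_succ_eq_SPseq_snd_mul]
    simp only [SPseq, mulVec_add, add_mulVec, mulVec_mulVec]
    abel

end Recurrence

section Calculus

variable {𝕜 E F : Type*} [NontriviallyNormedField 𝕜] [NormedAddCommGroup E] [NormedSpace 𝕜 E]
  [NormedAddCommGroup F] [NormedSpace 𝕜 F]

theorem iteratedDeriv_continuousLinearMap_comp (L : E →L[𝕜] F) {f : 𝕜 → E} {k : ℕ} {t : 𝕜}
    (hf : ContDiffAt 𝕜 k f t) :
    iteratedDeriv k (fun s => L (f s)) t = L (iteratedDeriv k f t) :=
  congrArg (· fun _ => 1) (L.iteratedFDeriv_comp_left hf le_rfl)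

theorem iteratedDeriv_pi_const {ι : Type*} [Fintype ι] {f : 𝕜 → E} {k : ℕ} {t : 𝕜}
    (hf : ContDiffAt 𝕜 k f t) :
    iteratedDeriv k (fun s (_ : ι) => f s) t = fun _ => iteratedDeriv k f t :=
  iteratedDeriv_continuousLinearMap_comp
    (ContinuousLinearMap.pi fun _ : ι => ContinuousLinearMap.id 𝕜 E) hf

variable [CompleteSpace 𝕜] {m n : Type*} [Fintype m] [Fintype n]

theorem contDiff_const_mulVec (A : Matrix m n 𝕜) {f : 𝕜 → n → 𝕜} {k : WithTop ℕ∞}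
    (hf : ContDiff 𝕜 k f) : ContDiff 𝕜 k fun s => A *ᵥ f s :=
  A.mulVecLin.toContinuousLinearMap.contDiff.comp hf

theorem iteratedDeriv_const_mulVec (A : Matrix m n 𝕜) {f : 𝕜 → n → 𝕜} {k : ℕ} {t : 𝕜}
    (hf : ContDiffAt 𝕜 k f t) :
    iteratedDeriv k (fun s => A *ᵥ f s) t = A *ᵥ iteratedDeriv k f t :=
  iteratedDeriv_continuousLinearMap_comp A.mulVecLin.toContinuousLinearMap hf

end Calculus

/-- The pairs of a state `x` and an input `u` that satisfy the second-order control system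
`x'' = A₀x + A₁x' + Bu` at all times. Regularity is not part of the notion: a derivative that does
not exist has the value `0` here. -/
def IsTrajectory {n r : ℕ} (A0 A1 : Matrix (Fin n) (Fin n) ℝ) (B : Matrix (Fin n) (Fin r) ℝ)
    (x : ℝ → Fin n → ℝ) (u : ℝ → Fin r → ℝ) : Prop :=
  ∀ t, iteratedDeriv 2 x t = A0 *ᵥ x t + A1 *ᵥ deriv x t + B *ᵥ u t

namespace IsTrajectory

variable {n r : ℕ} {A0 A1 : Matrix (Fin n) (Fin n) ℝ} {B : Matrix (Fin n) (Fin r) ℝ}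
  {x : ℝ → Fin n → ℝ} {u u' : ℝ → Fin r → ℝ} {L : Matrix (Fin r) (Fin n) ℝ} {k : ℕ}

theorem iteratedDeriv_add_two (h : IsTrajectory A0 A1 B x u) (hx : ContDiff ℝ (k + 1) x)
    (hu : ContDiff ℝ k u) (t : ℝ) :
    iteratedDeriv (k + 2) x t
      = A0 *ᵥ iteratedDeriv k x t + A1 *ᵥ iteratedDeriv (k + 1) x t
        + B *ᵥ iteratedDeriv k u t := by
  have hx₀ : ContDiff ℝ k x := hx.of_le le_self_add
  have hx₁ : ContDiff ℝ k (deriv x) := hx.deriv'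
  have hA₀ := contDiff_const_mulVec A0 hx₀
  have hA₁ := contDiff_const_mulVec A1 hx₁
  have hB := contDiff_const_mulVec B hu
  calc iteratedDeriv (k + 2) x t
      = iteratedDeriv k (iteratedDeriv 2 x) t := by
        simp only [iteratedDeriv_succ', iteratedDeriv_zero]
    _ = iteratedDeriv k (fun s => A0 *ᵥ x s + A1 *ᵥ deriv x s + B *ᵥ u s) t := by rw [funext h]
    _ = A0 *ᵥ iteratedDeriv k x t + A1 *ᵥ iteratedDeriv k (deriv x) t
          + B *ᵥ iteratedDeriv k u t := by
        rw [iteratedDeriv_fun_add (hA₀.add hA₁).contDiffAt hB.contDiffAt,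
          iteratedDeriv_fun_add hA₀.contDiffAt hA₁.contDiffAt,
          iteratedDeriv_const_mulVec A0 hx₀.contDiffAt,
          iteratedDeriv_const_mulVec A1 hx₁.contDiffAt,
          iteratedDeriv_const_mulVec B hu.contDiffAt]
    _ = _ := by rw [iteratedDeriv_succ']

theorem iteratedDeriv_add_two_eq_sum (h : IsTrajectory A0 A1 B x u)
    (hx : ContDiff ℝ (k + 1) x) (hu : ContDiff ℝ k u) (t : ℝ) :
    iteratedDeriv (k + 2) x t = (SPseq A0 A1 k).1 *ᵥ x t + (SPseq A0 A1 k).2 *ᵥ deriv x t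
      + ∑ p ∈ antidiagonal k, Mseq A0 A1 B p.1 *ᵥ iteratedDeriv p.2 u t := by
  have hrec : ∀ j ≤ k, iteratedDeriv (j + 2) x t
      = A0 *ᵥ iteratedDeriv j x t + A1 *ᵥ iteratedDeriv (j + 1) x t + B *ᵥ iteratedDeriv j u t :=
    fun j hj => h.iteratedDeriv_add_two (hx.of_le (by gcongr)) (hu.of_le (by gcongr)) t
  simpa only [iteratedDeriv_zero, iteratedDeriv_one] using
    eq_SPseq_mulVec_add_sum_of_recurrence (y := fun j => iteratedDeriv j x t)
      (v := fun j => iteratedDeriv j u t) hrec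

theorem input_eq (h : IsTrajectory A0 A1 B x u) (hL : L * B = 1) :
    u = fun t => L *ᵥ (iteratedDeriv 2 x t - A0 *ᵥ x t - A1 *ᵥ deriv x t) := by
  ext1 t
  rw [h t, sub_sub, add_sub_cancel_left, mulVec_mulVec, hL, one_mulVec]

theorem input_unique (h : IsTrajectory A0 A1 B x u) (h' : IsTrajectory A0 A1 B x u')
    (hL : L * B = 1) : u = u' :=
  (h.input_eq hL).trans (h'.input_eq hL).symm

theorem contDiff_input (h : IsTrajectory A0 A1 B x u) (hL : L * B = 1)
    (hx : ContDiff ℝ (k + 2) x) : ContDiff ℝ k u := by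
  have hx₁ : ContDiff ℝ (k + 1) (deriv x) :=
    ContDiff.deriv' (by rwa [add_assoc, one_add_one_eq_two])
  have hx₂ : ContDiff ℝ k (iteratedDeriv 2 x) := by
    simpa only [iteratedDeriv_succ, iteratedDeriv_zero] using hx₁.deriv'
  rw [h.input_eq hL]
  exact contDiff_const_mulVec L ((hx₂.sub (contDiff_const_mulVec A0 (hx.of_le le_self_add))).sub
    (contDiff_const_mulVec A1 (hx₁.of_le le_self_add)))

end IsTrajectory

section ScalarInput

variable {n : ℕ} {A0 A1 : Matrix (Fin n) (Fin n) ℝ} {b : Matrix (Fin n) (Fin 1) ℝ}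

theorem ctrbSq_mulVec (v : Fin n → ℝ) :
    ctrbSq A0 A1 b *ᵥ v = ∑ j : Fin n, Mseq A0 A1 b j *ᵥ fun _ => v j := by
  ext i
  simp [mulVec, dotProduct, ctrbSq]

theorem exists_mul_eq_one_of_isUnit_ctrbSq (hn : 1 ≤ n) (hC : IsUnit (ctrbSq A0 A1 b)) :
    ∃ L : Matrix (Fin 1) (Fin n) ℝ, L * b = 1 := by
  -- The first column of the controllability matrix is `b`, so row `0` of its inverse works.
  refine ⟨fun _ => (ctrbSq A0 A1 b)⁻¹ ⟨0, hn⟩, ?_⟩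
  have hinv : ((ctrbSq A0 A1 b)⁻¹ * ctrbSq A0 A1 b) ⟨0, hn⟩ ⟨0, hn⟩ = 1 := by
    rw [nonsing_inv_mul _ ((isUnit_iff_isUnit_det _).1 hC), one_apply_eq]
  ext i j
  rw [Subsingleton.elim i 0, Subsingleton.elim j 0, one_apply_eq]
  exact hinv

theorem IsTrajectory.ctrbSq_mulVec_iteratedDeriv_input {x : ℝ → Fin n → ℝ} {u : ℝ → ℝ}
    (hn : 1 ≤ n) (h : IsTrajectory A0 A1 b x fun t _ => u t)
    (hx : ContDiff ℝ n x) (hu : ContDiff ℝ (n - 1 : ℕ) u) (t : ℝ) :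
    ctrbSq A0 A1 b *ᵥ (fun j : Fin n => iteratedDeriv (n - 1 - j) u t)
      = iteratedDeriv (n + 1) x t - (SPseq A0 A1 (n - 1)).1 *ᵥ x t
        - (SPseq A0 A1 (n - 1)).2 *ᵥ deriv x t := by
  obtain ⟨k, rfl⟩ := Nat.exists_eq_add_of_le' hn
  simp only [Nat.add_sub_cancel] at hu ⊢
  have hu₁ : ContDiff ℝ k fun t (_ : Fin 1) => u t := contDiff_pi.2 fun _ => hu
  have hderiv : ∀ j ≤ k, iteratedDeriv j (fun t (_ : Fin 1) => u t) t
      = fun _ => iteratedDeriv j u t :=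
    fun j hj => iteratedDeriv_pi_const (hu.of_le (by gcongr)).contDiffAt
  have hsum : ctrbSq A0 A1 b *ᵥ (fun j : Fin (k + 1) => iteratedDeriv (k - j) u t)
      = ∑ p ∈ antidiagonal k, Mseq A0 A1 b p.1 *ᵥ
          iteratedDeriv p.2 (fun t (_ : Fin 1) => u t) t := by
    rw [ctrbSq_mulVec, Finset.Nat.sum_antidiagonal_eq_sum_range_succ_mk, Finset.sum_range]
    exact sum_congr rfl fun j _ => by rw [hderiv (k - j) (Nat.sub_le k j)]
  rw [hsum, h.iteratedDeriv_add_two_eq_sum (mod_cast hx) hu₁, add_assoc, add_sub_cancel_left,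
    add_sub_cancel_left]

end ScalarInput

theorem stmt13_general {n : ℕ} (hn : 1 ≤ n)
    (A0 A1 : Matrix (Fin n) (Fin n) ℝ) (b : Matrix (Fin n) (Fin 1) ℝ)
    (hC : IsUnit (ctrbSq A0 A1 b))
    (x : ℝ → Fin n → ℝ) (u : ℝ → ℝ) (hx : ContDiff ℝ (n + 1) x)
    (heq : ∀ t, iteratedDeriv 2 x t
      = A0.mulVec (x t) + A1.mulVec (deriv x t) + b.mulVec (fun _ => u t)) :
    (∀ t, (fun j : Fin n => iteratedDeriv (n - 1 - (j : ℕ)) u t)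
        = (ctrbSq A0 A1 b)⁻¹.mulVec
            (iteratedDeriv (n + 1) x t - (SPseq A0 A1 (n - 1)).1.mulVec (x t)
              - (SPseq A0 A1 (n - 1)).2.mulVec (deriv x t)))
      ∧ ∀ u' : ℝ → ℝ,
          (∀ t, iteratedDeriv 2 x t
            = A0.mulVec (x t) + A1.mulVec (deriv x t) + b.mulVec (fun _ => u' t)) →
          u' = u := by
  have htraj : IsTrajectory A0 A1 b x fun t _ => u t := heq
  obtain ⟨L, hL⟩ := exists_mul_eq_one_of_isUnit_ctrbSq hn hC
  have hu : ContDiff ℝ (n - 1 : ℕ) u := by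
    have hx' : ContDiff ℝ ((n - 1 : ℕ) + 2) x := by
      convert hx using 1
      norm_cast
      omega
    exact contDiff_pi.1 (htraj.contDiff_input hL hx') 0
  refine ⟨fun t => ?_, fun u' heq' => ?_⟩
  · rw [← htraj.ctrbSq_mulVec_iteratedDeriv_input hn (hx.of_le le_self_add) hu t, mulVec_mulVec,
      nonsing_inv_mul _ ((isUnit_iff_isUnit_det _).1 hC), one_mulVec]
  · have huniq : (fun t _ => u' t) = fun t _ => u t := IsTrajectory.input_unique heq' htraj hL
    exact funext fun t => congrFun₂ huniq t 0

theorem stmt13 {n : ℕ} (hn : 1 ≤ n)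
    (A0 A1 : Matrix (Fin n) (Fin n) ℝ) (b : Matrix (Fin n) (Fin 1) ℝ)
    (hC : IsUnit (ctrbSq A0 A1 b))
    (x : ℝ → Fin n → ℝ) (u : ℝ → ℝ)
    (hx : ContDiff ℝ (⊤ : ℕ∞) x) (hu : ContDiff ℝ (⊤ : ℕ∞) u)
    (heq : ∀ t, iteratedDeriv 2 x t
      = A0.mulVec (x t) + A1.mulVec (deriv x t) + b.mulVec (fun _ => u t)) :
    (∀ t, (fun j : Fin n => iteratedDeriv (n - 1 - (j : ℕ)) u t)
        = (ctrbSq A0 A1 b)⁻¹.mulVec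
            (iteratedDeriv (n + 1) x t - (SPseq A0 A1 (n - 1)).1.mulVec (x t)
              - (SPseq A0 A1 (n - 1)).2.mulVec (deriv x t)))
      ∧ ∀ u' : ℝ → ℝ, ContDiff ℝ (⊤ : ℕ∞) u' →
          (∀ t, iteratedDeriv 2 x t
            = A0.mulVec (x t) + A1.mulVec (deriv x t) + b.mulVec (fun _ => u' t)) →
          u' = u :=
  have h := stmt13_general hn A0 A1 b hC x u (hx.of_le (mod_cast le_top)) heq
  ⟨h.1, fun u' _ => h.2 u'⟩
end
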